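/- arXiv:2201.00550 — 3 statements merged into one kernel-verified Lean document; each statement's English description precedes it below -/
import Mathlib

section
/- Let m and n be positive integers, let α₁,…,αₙ be m-th roots of unity in ℂ, and let p₁,…,p_r be the distinct prime divisors of m. If α₁ + ⋯ + αₙ = 0, then there exist natural numbers n₁,…,n_r such that n = n₁p₁ + ⋯ + n_r p_r. -/
/-!
Peel a prime `p` off the order `m = k * p`: every `m`-th root of unity is `ξ ^ i * y` with `i < p`
and `y ^ k = 1`, for a suitable `ξ`, so a multiset of `m`-th roots of unity splits into `p` fibres
of `k`-th roots of unity.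

If `p ∣ k`, the powers `ξ ^ i` with `i < p` are linearly independent over `ℚ(ζ_k)`, so in a
vanishing sum every fibre has sum zero; this reduces the theorem to squarefree `m`.

If `p ∤ k`, the only relation is `1 + ξ + ⋯ + ξ ^ (p - 1) = 0`. When `∑ u = ∑ v`, the difference of
the sums of the `i`-th fibres `a i` of `u` and `b i` of `v` is therefore independent of `i`. If `u`
has fewer than `p` elements, some `a i₀` is empty, and then `a i + b i₀` and `b i` have equal sums
for all `i`. By induction on the number of primes, either the sizes of `v` and `u` differ by a
combination of the primes, or `v` is large; for empty `u`, large means `|v| ≥ (P - 1) * Q`, where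
`P < Q` are the two least primes dividing `m`. This is beyond the Frobenius number of `P` and `Q`,
so then `|v|` is a combination of `P` and `Q`.
-/

open IntermediateField Module

section Multiset

variable {ι α β : Type*}

theorem exists_multiset_eq_sum_map [Fintype ι] (f : ι → β → α) (P : β → Prop) (v : Multiset α)
    (hv : ∀ x ∈ v, ∃ i y, P y ∧ f i y = x) :
    ∃ w : ι → Multiset β, (∀ i, ∀ y ∈ w i, P y) ∧ v = ∑ i, (w i).map (f i) := by
  classical
  induction v using Multiset.induction with
  | empty => exact ⟨0, by simp⟩
  | cons x s ih =>
    obtain ⟨w, hw, hs⟩ := ih fun z hz ↦ hv z (Multiset.mem_cons_of_mem hz)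
    obtain ⟨i, y, hy, rfl⟩ := hv x (Multiset.mem_cons_self x s)
    refine ⟨Pi.single i {y} + w, fun j z hz ↦ ?_, ?_⟩
    · rcases Multiset.mem_add.1 hz with hz | hz
      · obtain rfl | hj := eq_or_ne j i
        · rw [Pi.single_eq_same, Multiset.mem_singleton] at hz
          exact hz ▸ hy
        · simp [Pi.single_eq_of_ne hj] at hz
      · exact hw j z hz
    · have hsingle : ∑ j, (Pi.single (M := fun _ ↦ Multiset β) i {y} j).map (f j) = {f i y} := by
        rw [Fintype.sum_eq_single i fun j hj ↦ by simp [Pi.single_eq_of_ne hj]]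
        simp
      simp only [Pi.add_apply, Multiset.map_add, Finset.sum_add_distrib, hsingle, ← hs,
        Multiset.singleton_add]

theorem multiset_sum_eq_card_of_forall_eq_one {R : Type*} [NonAssocSemiring R] {w : Multiset R}
    (hw : ∀ x ∈ w, x = 1) : w.sum = w.card := by
  rw [Multiset.eq_replicate_card.2 hw]
  simp

end Multiset

section Independence

variable {F K : Type*} [Field F] [Field K] [Algebra F K]

theorem eq_zero_of_sum_smul_pow_eq_zero {d : ℕ} {ξ : K} (hd : d ≤ (minpoly F ξ).natDegree)
    {c : Fin d → F} (hc : ∑ i, c i • ξ ^ (i : ℕ) = 0) (i : Fin d) : c i = 0 :=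
  Fintype.linearIndependent_iff.1
    ((linearIndependent_pow ξ).comp _ (Fin.castLE_injective hd)) c hc i

theorem eq_of_sum_smul_pow_eq_zero {p : ℕ} {ξ : K} (hp : 1 < p) (hξ : IsPrimitiveRoot ξ p)
    (hdeg : p - 1 ≤ (minpoly F ξ).natDegree) {c : Fin p → F}
    (hc : ∑ i, c i • ξ ^ (i : ℕ) = 0) (i j : Fin p) : c i = c j := by
  obtain ⟨q, rfl⟩ := Nat.exists_eq_succ_of_ne_zero (zero_lt_one.trans hp).ne'
  have hgeom : ∑ i : Fin (q + 1), ξ ^ (i : ℕ) = 0 := by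
    rw [Fin.sum_univ_eq_sum_range (ξ ^ ·), hξ.geom_sum_eq_zero hp]
  have hshift : ∑ i : Fin (q + 1), (c i - c (Fin.last q)) • ξ ^ (i : ℕ) = 0 := by
    simp only [sub_smul, Finset.sum_sub_distrib, ← Finset.smul_sum, hc, hgeom, smul_zero, sub_zero]
  rw [Fin.sum_univ_castSucc, sub_self, zero_smul, add_zero] at hshift
  have hlast (i : Fin (q + 1)) : c i = c (Fin.last q) := by
    induction i using Fin.lastCases with
    | last => rfl
    | cast i => exact sub_eq_zero.1 (eq_zero_of_sum_smul_pow_eq_zero hdeg hshift i)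
  rw [hlast i, hlast j]

end Independence

section RootsOfUnity

variable {K : Type*} [Field K] {m p : ℕ}

theorem exists_eq_pow_mul_of_pow_mul_eq_one [NeZero p] {ξ : K} (hξ : IsPrimitiveRoot (ξ ^ m) p)
    (hξ0 : ξ ≠ 0) {x : K} (hx : x ^ (m * p) = 1) :
    ∃ (i : Fin p) (y : K), y ^ m = 1 ∧ ξ ^ (i : ℕ) * y = x := by
  obtain ⟨i, hi, hxi⟩ := hξ.eq_pow_of_pow_eq_one (ξ := x ^ m) (by rw [← pow_mul, hx])
  refine ⟨⟨i, hi⟩, x / ξ ^ i, ?_, mul_div_cancel₀ _ (pow_ne_zero i hξ0)⟩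
  rw [div_pow, ← hxi, pow_right_comm, div_self (pow_ne_zero m (pow_ne_zero i hξ0))]

theorem exists_fibers [NeZero p] {ξ : K} (hξ : IsPrimitiveRoot (ξ ^ m) p) (hξ0 : ξ ≠ 0)
    {v : Multiset K} (hv : ∀ x ∈ v, x ^ (m * p) = 1) :
    ∃ w : Fin p → Multiset K, (∀ i, ∀ y ∈ w i, y ^ m = 1) ∧ v.card = ∑ i, (w i).card ∧
      v.sum = ∑ i, (w i).sum * ξ ^ (i : ℕ) := by
  obtain ⟨w, hw, rfl⟩ := exists_multiset_eq_sum_map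
    (fun (i : Fin p) y ↦ ξ ^ (i : ℕ) * y) (· ^ m = 1) v
    fun x hx ↦ exists_eq_pow_mul_of_pow_mul_eq_one hξ hξ0 (hv x hx)
  refine ⟨w, hw, by simp [Multiset.card_sum], ?_⟩
  rw [← Multiset.coe_sumAddMonoidHom, map_sum]
  exact Finset.sum_congr rfl fun i _ ↦ by
    rw [Multiset.coe_sumAddMonoidHom, Multiset.sum_map_mul_left, Multiset.map_id', mul_comm]

theorem multiset_sum_mem_adjoin (F : Type*) [Field F] [Algebra F K] {η : K} (hm : 0 < m)
    (hη : IsPrimitiveRoot η m) {w : Multiset K} (hw : ∀ x ∈ w, x ^ m = 1) : w.sum ∈ F⟮η⟯ := by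
  have : NeZero m := ⟨hm.ne'⟩
  refine multiset_sum_mem w fun x hx ↦ ?_
  obtain ⟨t, -, rfl⟩ := hη.eq_pow_of_pow_eq_one (hw x hx)
  exact pow_mem (mem_adjoin_simple_self F η) t

variable [CharZero K]

theorem finrank_rat_adjoin_primitiveRoot {η : K} (hm : 0 < m) (hη : IsPrimitiveRoot η m) :
    finrank ℚ ℚ⟮η⟯ = m.totient := by
  rw [adjoin.finrank (hη.isIntegral hm).tower_top, ← Polynomial.cyclotomic_eq_minpoly_rat hη hm,
    Polynomial.natDegree_cyclotomic]

theorem totient_lcm_le_totient_mul_natDegree_minpoly {n : ℕ} {η ξ : K} (hm : 0 < m) (hn : 0 < n)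
    (hη : IsPrimitiveRoot η m) (hξ : IsPrimitiveRoot ξ n) :
    (m.lcm n).totient ≤ m.totient * (minpoly ℚ⟮η⟯ ξ).natDegree := by
  have hint : IsIntegral ℚ⟮η⟯ ξ := (hξ.isIntegral hn).tower_top
  have : FiniteDimensional ℚ ℚ⟮η⟯ := adjoin.finiteDimensional (hη.isIntegral hm).tower_top
  have : FiniteDimensional ℚ⟮η⟯ ℚ⟮η⟯⟮ξ⟯ := adjoin.finiteDimensional hint
  have : FiniteDimensional ℚ ℚ⟮η⟯⟮ξ⟯ := .trans ℚ ℚ⟮η⟯ _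
  have hη' : IsPrimitiveRoot (algebraMap ℚ⟮η⟯ ℚ⟮η⟯⟮ξ⟯ (AdjoinSimple.gen ℚ η)) m :=
    .of_map_of_injective (f := algebraMap ℚ⟮η⟯⟮ξ⟯ K) hη (algebraMap ℚ⟮η⟯⟮ξ⟯ K).injective
  have hξ' : IsPrimitiveRoot (AdjoinSimple.gen ℚ⟮η⟯ ξ) n :=
    .of_map_of_injective (f := algebraMap ℚ⟮η⟯⟮ξ⟯ K) hξ (algebraMap ℚ⟮η⟯⟮ξ⟯ K).injective
  calc (m.lcm n).totient ≤ finrank ℚ ℚ⟮η⟯⟮ξ⟯ :=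
        hη'.lcm_totient_le_finrank hξ' (Polynomial.cyclotomic.irreducible_rat (Nat.lcm_pos hm hn))
    _ = finrank ℚ ℚ⟮η⟯ * finrank ℚ⟮η⟯ ℚ⟮η⟯⟮ξ⟯ := (finrank_mul_finrank ℚ ℚ⟮η⟯ ℚ⟮η⟯⟮ξ⟯).symm
    _ = m.totient * (minpoly ℚ⟮η⟯ ξ).natDegree := by
        rw [finrank_rat_adjoin_primitiveRoot hm hη, adjoin.finrank hint]

theorem exists_fibers_sum_eq_zero_of_dvd (hm : 0 < m) (hp : p.Prime) (hpm : p ∣ m) {ζ : K}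
    (hζ : IsPrimitiveRoot ζ (m * p)) {v : Multiset K} (hv : ∀ x ∈ v, x ^ (m * p) = 1)
    (hsum : v.sum = 0) :
    ∃ w : Fin p → Multiset K, (∀ i, ∀ y ∈ w i, y ^ m = 1) ∧ v.card = ∑ i, (w i).card ∧
      ∀ i, (w i).sum = 0 := by
  have : NeZero p := ⟨hp.ne_zero⟩
  have hmp : 0 < m * p := Nat.mul_pos hm hp.pos
  have hη : IsPrimitiveRoot (ζ ^ p) m := hζ.pow hmp (mul_comm m p)
  have hdeg : p ≤ (minpoly ℚ⟮ζ ^ p⟯ ζ).natDegree := by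
    have h := totient_lcm_le_totient_mul_natDegree_minpoly hm hmp hη hζ
    rw [Nat.lcm_eq_right (dvd_mul_right m p), mul_comm m p,
      Nat.totient_mul_of_prime_of_dvd hp hpm, mul_comm] at h
    exact Nat.le_of_mul_le_mul_left h (Nat.totient_pos.2 hm)
  obtain ⟨w, hw, hcard, hwsum⟩ := exists_fibers (hζ.pow hmp rfl) (hζ.ne_zero hmp.ne') hv
  refine ⟨w, hw, hcard, fun i ↦ ?_⟩
  have hc := eq_zero_of_sum_smul_pow_eq_zero hdeg
    (c := fun i ↦ ⟨(w i).sum, multiset_sum_mem_adjoin ℚ hm hη (hw i)⟩) (hwsum.symm.trans hsum) i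
  exact congrArg Subtype.val hc

theorem exists_fibers_sum_sub_sum_eq (hm : 0 < m) (hp : p.Prime) (hpm : m.Coprime p) {ζ : K}
    (hζ : IsPrimitiveRoot ζ (m * p)) {u v : Multiset K} (hu : ∀ x ∈ u, x ^ (m * p) = 1)
    (hv : ∀ x ∈ v, x ^ (m * p) = 1) (hsum : u.sum = v.sum) :
    ∃ a b : Fin p → Multiset K, (∀ i, ∀ x ∈ a i, x ^ m = 1) ∧ (∀ i, ∀ x ∈ b i, x ^ m = 1) ∧
      u.card = ∑ i, (a i).card ∧ v.card = ∑ i, (b i).card ∧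
      ∀ i j, (b i).sum - (a i).sum = (b j).sum - (a j).sum := by
  have : NeZero p := ⟨hp.ne_zero⟩
  have hmp : 0 < m * p := Nat.mul_pos hm hp.pos
  have hη : IsPrimitiveRoot (ζ ^ p) m := hζ.pow hmp (mul_comm m p)
  have hξ : IsPrimitiveRoot (ζ ^ m) p := hζ.pow hmp rfl
  have hdeg : p - 1 ≤ (minpoly ℚ⟮ζ ^ p⟯ (ζ ^ m)).natDegree := by
    have h := totient_lcm_le_totient_mul_natDegree_minpoly hm hp.pos hη hξ
    rw [hpm.lcm_eq_mul, Nat.totient_mul hpm, Nat.totient_prime hp] at h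
    exact Nat.le_of_mul_le_mul_left h (Nat.totient_pos.2 hm)
  have hξm : IsPrimitiveRoot ((ζ ^ m) ^ m) p := hξ.pow_of_coprime m hpm
  have hξ0 : ζ ^ m ≠ 0 := hξ.ne_zero hp.ne_zero
  obtain ⟨a, ha, hacard, hasum⟩ := exists_fibers hξm hξ0 hu
  obtain ⟨b, hb, hbcard, hbsum⟩ := exists_fibers hξm hξ0 hv
  refine ⟨a, b, ha, hb, hacard, hbcard, fun i j ↦ ?_⟩
  let c (i : Fin p) : ℚ⟮ζ ^ p⟯ := ⟨(b i).sum - (a i).sum,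
    sub_mem (multiset_sum_mem_adjoin ℚ hm hη (hb i)) (multiset_sum_mem_adjoin ℚ hm hη (ha i))⟩
  have hc : ∑ i, c i • (ζ ^ m) ^ (i : ℕ) = 0 := by
    change ∑ i, ((b i).sum - (a i).sum) * (ζ ^ m) ^ (i : ℕ) = 0
    simp only [sub_mul, Finset.sum_sub_distrib, ← hasum, ← hbsum, hsum, sub_self]
  exact congrArg Subtype.val (eq_of_sum_smul_pow_eq_zero hp.one_lt hξ hdeg hc i j)

end RootsOfUnity

section Counting

/-- The Lam–Leung lower bound `(P - 1 - U) * Q + U ≤ V` for the number `V` of roots of unity having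
the same sum as `U` given ones, rearranged so that no subtraction occurs. -/
def LamLeungBound (P Q U V : ℕ) : Prop :=
  P * Q + U ≤ V + Q * (U + 1)

theorem lamLeungBound_of_le {P Q U : ℕ} (hQ : 0 < Q) (hPQ : P ≤ Q) (hU : P ≤ U) (V : ℕ) :
    LamLeungBound P Q U V := by
  obtain ⟨d, rfl⟩ := Nat.exists_eq_add_of_le hU
  have : d ≤ Q * d := Nat.le_mul_of_pos_left d hQ
  unfold LamLeungBound
  linarith

theorem exists_mem_sum_eq_sum_add {p k : ℕ} {S : AddSubmonoid ℕ} (hp : p ∈ S) {a b : Fin p → ℕ}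
    (h : ∀ i, ∃ s ∈ S, b i = a i + k + s) : ∃ s ∈ S, ∑ i, b i = ∑ i, a i + s := by
  choose s hs hb using h
  refine ⟨k • p + ∑ i, s i, add_mem (nsmul_mem hp k) (sum_mem fun i _ ↦ hs i), ?_⟩
  simp only [hb, Finset.sum_add_distrib, Finset.sum_const, Finset.card_univ, Fintype.card_fin,
    smul_eq_mul]
  ring

theorem card_mul_le_sum_add_mul_sum {ι : Type*} {k : ℕ} {a b : ι → ℕ}
    (h : ∀ i, a i = 0 → k ≤ b i) (s : Finset ι) :
    s.card * k ≤ ∑ i ∈ s, b i + k * ∑ i ∈ s, a i := by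
  rw [Finset.mul_sum, ← Finset.sum_add_distrib, ← smul_eq_mul]
  refine Finset.card_nsmul_le_sum s _ k fun i _ ↦ ?_
  obtain h0 | h0 := Nat.eq_zero_or_pos (a i)
  · exact (h i h0).trans (Nat.le_add_right _ _)
  · exact (Nat.le_mul_of_pos_right k h0).trans (Nat.le_add_left _ _)

theorem lamLeungBound_sum {P Q p k : ℕ} (hPQ : P ≤ Q) (hQp : Q ≤ p) {a b : Fin p → ℕ}
    (ha : ∑ i, a i < P) (hk : ∀ i, a i = 0 → k ≤ b i) {i : Fin p}
    (hi : LamLeungBound P Q (a i + k) (b i)) : LamLeungBound P Q (∑ i, a i) (∑ i, b i) := by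
  have hall := card_mul_le_sum_add_mul_sum hk Finset.univ
  have hrest := card_mul_le_sum_add_mul_sum hk (Finset.univ.erase i)
  rw [Finset.card_fin] at hall
  rw [Finset.card_erase_of_mem (Finset.mem_univ i), Finset.card_fin] at hrest
  have hasum := Finset.add_sum_erase Finset.univ a (Finset.mem_univ i)
  have hbsum := Finset.add_sum_erase Finset.univ b (Finset.mem_univ i)
  unfold LamLeungBound at *
  generalize ∑ j ∈ Finset.univ.erase i, a j = A at *
  generalize ∑ j ∈ Finset.univ.erase i, b j = B at *
  generalize ∑ j, a j = U at *
  generalize ∑ j, b j = V at *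
  generalize a i = a₀ at *
  generalize b i = b₀ at *
  zify [i.pos] at *
  -- If `k < Q`, only the empty fibres other than `i` count, each of them contributing at least `k`
  -- to `V`, together with the bound for `i`; if `k ≥ Q`, the empty fibres suffice.
  obtain hkQ | hkQ := lt_or_ge (k : ℤ) Q
  · have : (0 : ℤ) ≤ A * (Q - 1 - k) := mul_nonneg (by positivity) (by linarith)
    have : (0 : ℤ) ≤ k * (p - Q) := mul_nonneg (by positivity) (by linarith)
    rw [← hasum, ← hbsum]
    linarith
  · have : (0 : ℤ) ≤ (k - Q) * (p - U) := mul_nonneg (by linarith) (by linarith)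
    have : (0 : ℤ) ≤ Q * (p - P) := mul_nonneg (by positivity) (by linarith)
    linarith

theorem mem_addSubmonoid_of_mul_le_add {S : AddSubmonoid ℕ} {p q n : ℕ} (hp : 1 < p) (hq : 1 < q)
    (hpq : p.Coprime q) (hpS : p ∈ S) (hqS : q ∈ S) (hn : p * q ≤ n + q) : n ∈ S := by
  have hfrob := frobeniusNumber_pair hpq hp hq
  have hlt : p * q - p - q < n := by
    have := Nat.add_le_mul hp hq
    omega
  have hle : AddSubmonoid.closure {p, q} ≤ S :=
    AddSubmonoid.closure_le.2 (Set.pair_subset hpS hqS)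
  exact hle ((frobeniusNumber_iff.1 hfrob).2 n hlt)

end Counting

section Dichotomy

/-- Two multisets of `m`-th roots of unity in `K` with equal sums either have sizes differing by an
element of `S`, or satisfy `LamLeungBound P Q`. Here `S` is meant to contain the prime divisors of
`m`, `P` to be the least of them, and `Q` a lower bound for the others. Taking `u` empty gives the
case of a vanishing sum; general `u` is what makes the induction over the primes go through. -/
def LamLeungDichotomy (K : Type*) [Field K] (m : ℕ) (S : AddSubmonoid ℕ) (P Q : ℕ) : Prop :=
  ∀ u v : Multiset K, (∀ x ∈ u, x ^ m = 1) → (∀ x ∈ v, x ^ m = 1) → u.sum = v.sum →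
    (∃ s ∈ S, v.card = u.card + s) ∨ LamLeungBound P Q u.card v.card

variable {K : Type*} [Field K] [CharZero K] {m p P Q : ℕ} {S : AddSubmonoid ℕ}

theorem exists_fibers_add_sum_eq (hm : 0 < m) (hp : p.Prime) (hpm : m.Coprime p) {ζ : K}
    (hζ : IsPrimitiveRoot ζ (m * p)) {u v : Multiset K} (hu : ∀ x ∈ u, x ^ (m * p) = 1)
    (hv : ∀ x ∈ v, x ^ (m * p) = 1) (hsum : u.sum = v.sum) (hup : u.card < p) :
    ∃ (a b : Fin p → Multiset K) (c : Multiset K), (∀ i, ∀ x ∈ a i + c, x ^ m = 1) ∧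
      (∀ i, ∀ x ∈ b i, x ^ m = 1) ∧ u.card = ∑ i, (a i).card ∧ v.card = ∑ i, (b i).card ∧
      (∀ i, (a i + c).sum = (b i).sum) ∧ ∀ i, (a i).card = 0 → c.card ≤ (b i).card := by
  obtain ⟨a, b, ha, hb, hacard, hbcard, hab⟩ :=
    exists_fibers_sum_sub_sum_eq hm hp hpm hζ hu hv hsum
  have hempty : ∃ i, (a i).card = 0 := by
    by_contra! hne
    have := Finset.card_nsmul_le_sum Finset.univ (fun i ↦ (a i).card) 1
      fun i _ ↦ Nat.pos_of_ne_zero (hne i)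
    simp only [Finset.card_fin, smul_eq_mul, mul_one] at this
    omega
  obtain ⟨i₀, hi₀, hmin⟩ := Finset.exists_min_image (Finset.univ.filter fun i ↦ (a i).card = 0)
    (fun i ↦ (b i).card) (by simpa [Finset.Nonempty] using hempty)
  simp only [Finset.mem_filter, Finset.mem_univ, true_and] at hi₀ hmin
  refine ⟨a, b, b i₀, fun i x hx ↦ ?_, hb, hacard, hbcard, fun i ↦ ?_, hmin⟩
  · exact (Multiset.mem_add.1 hx).elim (ha i x) (hb i₀ x)
  · have h := hab i i₀
    rw [Multiset.card_eq_zero.1 hi₀, Multiset.sum_zero, sub_zero, sub_eq_iff_eq_add'] at h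
    rw [Multiset.sum_add, h]

theorem lamLeungDichotomy_prime (hp : p.Prime) (hpQ : p ≤ Q) (hpS : p ∈ S) {ζ : K}
    (hζ : IsPrimitiveRoot ζ p) : LamLeungDichotomy K p S p Q := by
  intro u v hu hv hsum
  obtain hU | hU := le_or_gt p u.card
  · exact .inr (lamLeungBound_of_le (hp.pos.trans_le hpQ) hpQ hU _)
  rw [← one_mul p] at hζ hu hv
  obtain ⟨a, b, c, hac, hb, hacard, hbcard, habc, -⟩ :=
    exists_fibers_add_sum_eq one_pos hp (Nat.coprime_one_left p) hζ hu hv hsum hU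
  simp only [pow_one] at hac hb
  rw [hacard, hbcard]
  refine .inl (exists_mem_sum_eq_sum_add hpS (k := c.card) fun i ↦ ⟨0, zero_mem S, ?_⟩)
  have h := habc i
  rw [multiset_sum_eq_card_of_forall_eq_one (hac i), multiset_sum_eq_card_of_forall_eq_one (hb i),
    Nat.cast_inj, Multiset.card_add] at h
  exact h.symm

theorem LamLeungDichotomy.mul_prime (h : LamLeungDichotomy K m S P Q) (hm : 0 < m)
    (hQ : 0 < Q) (hPQ : P ≤ Q) (hQp : Q ≤ p) (hp : p.Prime) (hpm : m.Coprime p) (hpS : p ∈ S)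
    {ζ : K} (hζ : IsPrimitiveRoot ζ (m * p)) : LamLeungDichotomy K (m * p) S P Q := by
  intro u v hu hv hsum
  obtain hU | hU := le_or_gt P u.card
  · exact .inr (lamLeungBound_of_le hQ hPQ hU _)
  obtain ⟨a, b, c, hac, hb, hacard, hbcard, habc, hc⟩ :=
    exists_fibers_add_sum_eq hm hp hpm hζ hu hv hsum (hU.trans_le (hPQ.trans hQp))
  have hfiber (i : Fin p) := h (a i + c) (b i) (hac i) (hb i) (habc i)
  simp only [Multiset.card_add] at hfiber
  rw [hacard, hbcard]
  rw [hacard] at hU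
  by_cases hall : ∀ i, ∃ s ∈ S, (b i).card = (a i).card + c.card + s
  · exact .inl (exists_mem_sum_eq_sum_add hpS hall)
  · obtain ⟨i, hi⟩ := not_forall.1 hall
    exact .inr (lamLeungBound_sum hPQ hQp hU hc ((hfiber i).resolve_left hi))

theorem lamLeungDichotomy_prime_mul {k : ℕ} (hP : P.Prime) (hPQ : P ≤ Q) (hk : Squarefree (P * k))
    (hQ : ∀ q : ℕ, q.Prime → q ∣ k → Q ≤ q) (hS : ∀ q : ℕ, q.Prime → q ∣ P * k → q ∈ S) {ζ : K}
    (hζ : IsPrimitiveRoot ζ (P * k)) : LamLeungDichotomy K (P * k) S P Q := by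
  induction k using induction_on_primes generalizing ζ with
  | zero => simp at hk
  | one =>
    rw [mul_one] at *
    exact lamLeungDichotomy_prime hP hPQ (hS P hP dvd_rfl) hζ
  | prime_mul q k hq ih =>
    rw [mul_left_comm, mul_comm q] at hk hS hζ ⊢
    have hpos : 0 < P * k * q := Nat.pos_of_ne_zero hk.ne_zero
    have hdvd : P * k ∣ P * k * q := dvd_mul_right _ _
    have hdich : LamLeungDichotomy K (P * k) S P Q :=
      ih (hk.squarefree_of_dvd hdvd) (fun r hr hrk ↦ hQ r hr (hrk.mul_left q))
        (fun r hr hrk ↦ hS r hr (hrk.trans hdvd)) (hζ.pow hpos (mul_comm _ q))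
    exact hdich.mul_prime (Nat.pos_of_mul_pos_right hpos) (hP.pos.trans_le hPQ) hPQ
      (hQ q hq (dvd_mul_right q k)) hq (Nat.coprime_of_squarefree_mul hk)
      (hS q hq (dvd_mul_left q _)) hζ

end Dichotomy

section Vanishing

variable {K : Type*} [Field K] [CharZero K] {m : ℕ} {S : AddSubmonoid ℕ}

theorem card_mem_addSubmonoid_of_sum_eq_zero_of_squarefree (hm : Squarefree m)
    (hS : ∀ q : ℕ, q.Prime → q ∣ m → q ∈ S) {ζ : K} (hζ : IsPrimitiveRoot ζ m) {v : Multiset K}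
    (hv : ∀ x ∈ v, x ^ m = 1) (hsum : v.sum = 0) : v.card ∈ S := by
  obtain rfl | hm1 := eq_or_ne m 1
  · simp only [pow_one] at hv
    rw [multiset_sum_eq_card_of_forall_eq_one hv, Nat.cast_eq_zero] at hsum
    exact hsum ▸ zero_mem S
  have hP := Nat.minFac_prime hm1
  obtain ⟨k, hk⟩ := Nat.minFac_dvd m
  have hmem_or_le (Q : ℕ) (hPQ : m.minFac ≤ Q) (hQ : ∀ q : ℕ, q.Prime → q ∣ k → Q ≤ q) :
      v.card ∈ S ∨ m.minFac * Q ≤ v.card + Q := by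
    have hdich : LamLeungDichotomy K m S m.minFac Q := by
      have := lamLeungDichotomy_prime_mul (K := K) (S := S) (k := k) (ζ := ζ) hP hPQ
      rw [← hk] at this
      exact this hm hQ hS hζ
    simpa [LamLeungBound] using hdich 0 v (by simp) hv hsum.symm
  obtain rfl | hk1 := eq_or_ne k 1
  · -- No prime divides `k = 1`, so `Q` can be taken so large that the bound fails.
    refine (hmem_or_le (v.card + m.minFac) (Nat.le_add_left _ _)
      fun q hq hq1 ↦ (hq.not_dvd_one hq1).elim).resolve_right ?_
    have := Nat.mul_le_mul_right (v.card + m.minFac) hP.two_le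
    have := hP.pos
    omega
  · have hQ := Nat.minFac_prime hk1
    have hQm : k.minFac ∣ m := (Nat.minFac_dvd k).trans (Dvd.intro_left _ hk.symm)
    have hcop : m.minFac.Coprime k.minFac :=
      (Nat.coprime_of_squarefree_mul (hk ▸ hm)).coprime_dvd_right (Nat.minFac_dvd k)
    refine (hmem_or_le k.minFac (Nat.minFac_le_of_dvd hQ.two_le hQm)
      fun q hq hqk ↦ Nat.minFac_le_of_dvd hq.two_le hqk).elim id ?_
    exact mem_addSubmonoid_of_mul_le_add hP.one_lt hQ.one_lt hcop (hS _ hP (Nat.minFac_dvd m))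
      (hS _ hQ hQm)

theorem card_mem_addSubmonoid_of_sum_eq_zero (hm : 0 < m)
    (hS : ∀ q : ℕ, q.Prime → q ∣ m → q ∈ S) {ζ : K} (hζ : IsPrimitiveRoot ζ m) {v : Multiset K}
    (hv : ∀ x ∈ v, x ^ m = 1) (hsum : v.sum = 0) : v.card ∈ S := by
  induction m using Nat.strong_induction_on generalizing ζ v with
  | _ m ih =>
  by_cases hsq : Squarefree m
  · exact card_mem_addSubmonoid_of_sum_eq_zero_of_squarefree hsq hS hζ hv hsum
  obtain ⟨p, hp, k, rfl⟩ : ∃ p, p.Prime ∧ p * p ∣ m := by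
    simpa [Nat.squarefree_iff_prime_squarefree] using hsq
  rw [mul_assoc, mul_comm p] at *
  have hpk : 0 < p * k := Nat.pos_of_mul_pos_right hm
  obtain ⟨w, hw, hcard, hwsum⟩ :=
    exists_fibers_sum_eq_zero_of_dvd hpk hp (dvd_mul_right p k) hζ hv hsum
  rw [hcard]
  exact sum_mem fun i _ ↦ ih (p * k) (lt_mul_of_one_lt_right hpk hp.one_lt) hpk
    (fun q hq hqk ↦ hS q hq (hqk.mul_right p)) (hζ.pow hm (mul_comm _ p)) (hw i) (hwsum i)

end Vanishing

theorem roots_of_unity_sum_zero_general {R ι : Type*} [CommRing R] [IsDomain R] [CharZero R]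
    [Fintype ι] {m : ℕ} (hm : 0 < m) {α : ι → R} (hα : ∀ i, α i ^ m = 1) (hsum : ∑ i, α i = 0) :
    ∃ c : ℕ → ℕ, Fintype.card ι = ∑ p ∈ m.primeFactors, c p * p := by
  let K := AlgebraicClosure (FractionRing R)
  let f : R →+* K := (algebraMap (FractionRing R) K).comp (algebraMap R (FractionRing R))
  have hf : Function.Injective f :=
    (algebraMap (FractionRing R) K).injective.comp (IsFractionRing.injective R (FractionRing R))
  have : CharZero K := charZero_of_injective_ringHom hf
  have : NeZero m := ⟨hm.ne'⟩
  obtain ⟨ζ, hζ⟩ := HasEnoughRootsOfUnity.exists_primitiveRoot K m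
  have hmem := card_mem_addSubmonoid_of_sum_eq_zero hm
    (S := AddSubmonoid.closure (m.primeFactors : Set ℕ))
    (v := Finset.univ.val.map fun i ↦ f (α i))
    (fun q hq hqm ↦ AddSubmonoid.subset_closure (Nat.mem_primeFactors.2 ⟨hq, hqm, hm.ne'⟩)) hζ
    (by simp [← map_pow, hα])
    (by rw [← Finset.sum_eq_multiset_sum, ← map_sum, hsum, map_zero])
  obtain ⟨c, -, hc⟩ := AddSubmonoid.mem_closure_finset.1 hmem
  exact ⟨c, by simpa using hc.symm⟩

theorem roots_of_unity_sum_zero (m n : ℕ) (hm : 0 < m) (hn : 0 < n)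
    (α : Fin n → ℂ) (hα : ∀ i, α i ^ m = 1) (hsum : ∑ i, α i = 0) :
    ∃ c : ℕ → ℕ, n = ∑ p ∈ m.primeFactors, c p * p := by
  simpa using roots_of_unity_sum_zero_general hm hα hsum
end

section
/- Let G be a finite group with normal subgroups A and B such that A ∩ B = 1, and let a ∈ A. Then a is a vanishing element of G if and only if the coset aB is a vanishing element of the quotient group G/B. -/
def IsVanishing {G : Type} [Group G] (g : G) : Prop :=
  ∃ V : FDRep ℂ G, CategoryTheory.Simple V ∧ V.character g = 0

/-!
Let `z` be the sum of the conjugates `x g x⁻¹` over `x ∈ G`. It is central in `ℂ[G]`, so it acts on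
an irreducible `V` by a scalar, and taking traces shows that this scalar is `0` exactly when
`χ_V(g) = 0`. Since a central element is a unit unless it kills some simple module, `g` is vanishing
if and only if `z` is not a unit of `ℂ[G]`.

For `a ∈ A` this `z` already lies in `ℂ[A]`, and its image in `ℂ[G/B]` is `|B|` times the
corresponding element for `aB`. Both `ℂ[A] → ℂ[G]` and `ℂ[A] → ℂ[G/B]` are injective, and an element
of the Artinian ring `ℂ[A]` is a unit as soon as its image in a larger ring is one.
-/

open CategoryTheory MonoidAlgebra Representation
open scoped MonoidAlgebra

universe u v

section Ring

variable {R S : Type*}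

theorem isUnit_map_iff_of_injective [Semiring R] [IsArtinianRing R] [Semiring S] {f : R →+* S}
    (hf : Function.Injective f) {r : R} : IsUnit (f r) ↔ IsUnit r := by
  refine ⟨fun h ↦ IsArtinianRing.isUnit_iff_isRightRegular.mpr fun x y hxy ↦ hf ?_, fun h ↦ h.map f⟩
  exact h.mul_right_cancel (by simpa only [map_mul] using congrArg f hxy)

theorem exists_isMaximal_smul_quotient_eq_zero [Ring R] {z : R} (hz : ∀ r, r * z = z * r)
    (hu : ¬ IsUnit z) : ∃ I : Ideal R, I.IsMaximal ∧ ∀ m : R ⧸ I, z • m = 0 := by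
  have hspan : Ideal.span {z} ≠ ⊤ := fun htop ↦ by
    obtain ⟨r, hr⟩ := Ideal.mem_span_singleton'.mp ((Ideal.eq_top_iff_one _).mp htop)
    exact hu (isUnit_iff_exists.mpr ⟨r, (hz r).symm.trans hr, hr⟩)
  obtain ⟨I, hI, hle⟩ := Ideal.exists_le_maximal _ hspan
  refine ⟨I, hI, fun m ↦ ?_⟩
  obtain ⟨r, rfl⟩ := Submodule.Quotient.mk_surjective I m
  rw [← Submodule.Quotient.mk_smul, Submodule.Quotient.mk_eq_zero, smul_eq_mul, ← hz]
  exact I.mul_mem_left r (hle (Ideal.mem_span_singleton_self z))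

end Ring

section ConjSum

variable {G H : Type*} [Group G] [Fintype G] [Group H] [Fintype H]

/-- The sum of `x * g * x⁻¹` over all `x : G` in the group algebra `k[G]`. This is the class sum of
`g` multiplied by the order of its centralizer; summing over `G` rather than over the conjugacy
class keeps class sizes out of the comparison with quotient groups. -/
noncomputable def conjSum (k : Type*) [Semiring k] (g : G) : k[G] :=
  ∑ x : G, of k G (x * g * x⁻¹)

theorem conjSum_mem_center (k : Type*) [CommSemiring k] (g : G) :
    conjSum k g ∈ Subalgebra.center k k[G] := by
  rw [Subalgebra.mem_center_iff]
  intro r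
  induction r using MonoidAlgebra.induction_on with
  | of h =>
    rw [conjSum, Finset.mul_sum, Finset.sum_mul]
    refine Fintype.sum_equiv (Equiv.mulLeft h) _ _ fun x ↦ ?_
    simp only [← map_mul, Equiv.coe_mulLeft, mul_inv_rev, mul_assoc, inv_mul_cancel, mul_one]
  | add r s hr hs => rw [add_mul, mul_add, hr, hs]
  | smul c r hr => rw [smul_mul_assoc, mul_smul_comm, hr]

theorem exists_mapDomain_subtype_eq_conjSum (k : Type*) [Semiring k] {N : Subgroup G} [N.Normal]
    {g : G} (hg : g ∈ N) : ∃ u : k[N], mapDomainRingHom k N.subtype u = conjSum k g :=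
  ⟨∑ x : G, of k N (MulAut.conjNormal x ⟨g, hg⟩), by simp [conjSum]⟩

theorem sum_comp_eq_card_ker_nsmul {M : Type*} [AddCommMonoid M] {f : G →* H}
    (hf : Function.Surjective f) (φ : H → M) :
    ∑ x, φ (f x) = Nat.card f.ker • ∑ y, φ y := by
  classical
  rw [← Finset.sum_fiberwise Finset.univ f, Finset.smul_sum]
  refine Finset.sum_congr rfl fun y _ ↦ ?_
  have hcard : Finset.card {x | f x = y} = Nat.card f.ker := by
    rw [MonoidHom.card_fiber_eq_of_mem_range f (hf y) ⟨1, map_one f⟩, Nat.card_eq_fintype_card,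
      Fintype.card_subtype]
    simp only [MonoidHom.mem_ker]
  rw [← hcard, ← Finset.sum_const]
  exact Finset.sum_congr rfl fun x hx ↦ congrArg φ (Finset.mem_filter.mp hx).2

theorem mapDomainRingHom_conjSum (k : Type*) [Semiring k] {f : G →* H}
    (hf : Function.Surjective f) (g : G) :
    mapDomainRingHom k f (conjSum k g) = Nat.card f.ker • conjSum k (f g) := by
  rw [conjSum, conjSum, ← sum_comp_eq_card_ker_nsmul hf]
  simp

theorem isUnit_conjSum_map_iff {k : Type*} [CommRing k] [IsArtinianRing k] {f : G →* H}
    (hf : Function.Surjective f) (hker : IsUnit (Nat.card f.ker : k)) {N : Subgroup G} [N.Normal]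
    (hN : Disjoint N f.ker) {g : G} (hg : g ∈ N) :
    IsUnit (conjSum k (f g)) ↔ IsUnit (conjSum k g) := by
  obtain ⟨u, hu⟩ := exists_mapDomain_subtype_eq_conjSum k hg
  have : IsArtinianRing k[N] := isArtinian_of_tower k inferInstance
  have hinj : Function.Injective (f.comp N.subtype) := by
    rw [← MonoidHom.ker_eq_bot_iff, ← MonoidHom.comap_ker, ← Subgroup.subgroupOf,
      Subgroup.subgroupOf_eq_bot]
    exact hN.symm
  have himage : mapDomainRingHom k (f.comp N.subtype) u = hker.unit • conjSum k (f g) := by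
    rw [mapDomainRingHom_comp, RingHom.comp_apply, hu, mapDomainRingHom_conjSum k hf,
      Units.smul_def, hker.unit_spec, Nat.cast_smul_eq_nsmul]
  calc IsUnit (conjSum k (f g))
      ↔ IsUnit (mapDomainRingHom k (f.comp N.subtype) u) := by rw [himage, isUnit_smul_iff]
    _ ↔ IsUnit u := isUnit_map_iff_of_injective (mapDomain_injective hinj)
    _ ↔ IsUnit (mapDomainRingHom k N.subtype u) :=
      (isUnit_map_iff_of_injective (mapDomain_injective N.subtype_injective)).symm
    _ ↔ IsUnit (conjSum k g) := by rw [hu]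

theorem trace_asAlgebraHom_conjSum {k V : Type*} [Field k] [AddCommGroup V] [Module k V]
    (ρ : Representation k G V) (g : G) :
    LinearMap.trace k V (ρ.asAlgebraHom (conjSum k g)) = Nat.card G * ρ.character g := by
  have hconj (x : G) : LinearMap.trace k V (ρ (x * g * x⁻¹)) = ρ.character g := ρ.char_conj g x
  simp only [conjSum, map_sum, asAlgebraHom_of, hconj, Finset.sum_const, Finset.card_univ,
    nsmul_eq_mul, Nat.card_eq_fintype_card]

end ConjSum

theorem asAlgebraHom_ofModule'_apply {k G M : Type*} [CommSemiring k] [Monoid G] [AddCommMonoid M]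
    [Module k M] [Module k[G] M] [IsScalarTower k k[G] M] (r : k[G]) (m : M) :
    (ofModule' (k := k) (G := G) M).asAlgebraHom r m = r • m := by
  have : (ofModule' (k := k) (G := G) M).asAlgebraHom = Algebra.lsmul k k M :=
    (MonoidAlgebra.lift k (M →ₗ[k] M) G).apply_symm_apply _
  rw [this, Algebra.lsmul_coe]

theorem isIrreducible_ofModule' {k G : Type*} [Field k] [Monoid G] (M : Type*) [AddCommGroup M]
    [Module k M] [Module k[G] M] [IsScalarTower k k[G] M] [IsSimpleModule k[G] M] :
    (ofModule' (k := k) (G := G) M).IsIrreducible := by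
  let ρ : Representation k G M := ofModule' M
  let e : ρ.asModule ≃ₗ[k[G]] M :=
    { ρ.asModuleEquiv with
      map_smul' r x := (ρ.asModuleEquiv_map_smul r x).trans (asAlgebraHom_ofModule'_apply r _) }
  exact (irreducible_iff_isSimpleModule_asModule ρ).mpr (IsSimpleModule.congr e)

section Simple

variable {k : Type u} {G : Type v} [Field k] [Monoid G]

theorem nontrivial_of_simple (V : FDRep k G) [Simple V] : Nontrivial V := by
  by_contra hV
  rw [not_nontrivial_iff_subsingleton] at hV
  refine id_nonzero V ?_
  ext v
  exact Subsingleton.elim _ _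

theorem exists_asAlgebraHom_eq_smul_id [IsAlgClosed k] (V : FDRep k G) [Simple V] {z : k[G]}
    (hz : z ∈ Subalgebra.center k k[G]) :
    ∃ c : k, asAlgebraHom V.ρ z = c • LinearMap.id := by
  have hcomm (g : G) : asAlgebraHom V.ρ z ∘ₗ V.ρ g = V.ρ g ∘ₗ asAlgebraHom V.ρ z := by
    have := congrArg (asAlgebraHom V.ρ) (Subalgebra.mem_center_iff.mp hz (of k G g))
    rw [map_mul, map_mul, asAlgebraHom_of] at this
    exact this.symm
  let f : V ⟶ V := ⟨InducedCategory.homMk (ModuleCat.ofHom (asAlgebraHom V.ρ z)), fun g ↦ by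
    ext v
    exact LinearMap.congr_fun (hcomm g) v⟩
  obtain ⟨c, hc⟩ := endomorphism_simple_eq_smul_id k f
  exact ⟨c, congrArg (fun f : V ⟶ V ↦ f.hom.hom.hom) hc.symm⟩

end Simple

theorem asAlgebraHom_conjSum_eq_zero_iff {k : Type u} {G : Type v} [Field k] [IsAlgClosed k]
    [CharZero k] [Group G] [Fintype G] (V : FDRep k G) [Simple V] (g : G) :
    asAlgebraHom V.ρ (conjSum k g) = 0 ↔ V.character g = 0 := by
  have htrace : LinearMap.trace k V (asAlgebraHom V.ρ (conjSum k g)) =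
      Nat.card G * V.character g := trace_asAlgebraHom_conjSum V.ρ g
  have hcard : (Nat.card G : k) ≠ 0 := Nat.cast_ne_zero.mpr Nat.card_pos.ne'
  constructor
  · intro hzero
    rw [hzero, map_zero] at htrace
    exact (mul_eq_zero.mp htrace.symm).resolve_left hcard
  · intro hχ
    obtain ⟨c, hc⟩ := exists_asAlgebraHom_eq_smul_id V (conjSum_mem_center k g)
    have := nontrivial_of_simple V
    have hdim : (Module.finrank k V : k) ≠ 0 := Nat.cast_ne_zero.mpr Module.finrank_pos.ne'
    rw [hχ, mul_zero, hc, map_smul, LinearMap.trace_id, smul_eq_mul] at htrace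
    rw [hc, (mul_eq_zero.mp htrace).resolve_right hdim, zero_smul]

section SimpleModule

variable {k G : Type u} [Field k] [IsAlgClosed k] [Group G] [Finite G] [NeZero (Nat.card G : k)]

theorem simple_of_isIrreducible {V : Type u} [AddCommGroup V] [Module k V]
    [FiniteDimensional k V] (ρ : Representation k G V) [ρ.IsIrreducible] : Simple (FDRep.of ρ) := by
  let e := (Rep.homLinearEquiv _ _).symm.trans
    (FDRep.forget₂HomLinearEquiv (FDRep.of ρ) (FDRep.of ρ))
  rw [FDRep.simple_iff_end_is_rank_one, ← e.finrank_eq]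
  exact IsIrreducible.finrank_intertwiningMap_self ρ

theorem exists_simple_of_isSimpleModule (M : Type u) [AddCommGroup M] [Module k M]
    [Module k[G] M] [IsScalarTower k k[G] M] [IsSimpleModule k[G] M] {z : k[G]}
    (hz : ∀ m : M, z • m = 0) :
    ∃ V : FDRep k G, Simple V ∧ asAlgebraHom V.ρ z = 0 := by
  have : FiniteDimensional k M := Module.Finite.trans k[G] M
  have := isIrreducible_ofModule' (k := k) (G := G) M
  refine ⟨FDRep.of (ofModule' M), simple_of_isIrreducible _, ?_⟩
  ext m
  exact (asAlgebraHom_ofModule'_apply z m).trans (hz m)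

theorem not_isUnit_iff_exists_simple {z : k[G]} (hz : z ∈ Subalgebra.center k k[G]) :
    ¬ IsUnit z ↔ ∃ V : FDRep k G, Simple V ∧ asAlgebraHom V.ρ z = 0 := by
  constructor
  · intro hu
    obtain ⟨I, hI, hzero⟩ :=
      exists_isMaximal_smul_quotient_eq_zero (Subalgebra.mem_center_iff.mp hz) hu
    have : IsSimpleModule k[G] (k[G] ⧸ I) := isSimpleModule_iff_isCoatom.mpr hI.out
    exact exists_simple_of_isSimpleModule (k[G] ⧸ I) hzero
  · rintro ⟨V, hV, hzero⟩ hu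
    have := nontrivial_of_simple V
    exact not_isUnit_zero (hzero ▸ hu.map (asAlgebraHom V.ρ))

end SimpleModule

theorem isVanishing_iff_not_isUnit_conjSum {G : Type} [Group G] [Fintype G] (g : G) :
    IsVanishing g ↔ ¬ IsUnit (conjSum ℂ g) := by
  rw [not_isUnit_iff_exists_simple (conjSum_mem_center ℂ g)]
  exact exists_congr fun V ↦ and_congr_right fun _ ↦ (asAlgebraHom_conjSum_eq_zero_iff V g).symm

theorem vanishing_iff_vanishing_in_quotient (G : Type) [Group G] [Fintype G]
    (A B : Subgroup G) [A.Normal] [B.Normal] (hAB : A ⊓ B = ⊥)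
    (a : G) (ha : a ∈ A) :
    IsVanishing a ↔ IsVanishing (QuotientGroup.mk a : G ⧸ B) := by
  have : Fintype (G ⧸ B) := Fintype.ofFinite _
  have hker : (QuotientGroup.mk' B).ker = B := QuotientGroup.ker_mk' B
  have hcard : IsUnit (Nat.card (QuotientGroup.mk' B).ker : ℂ) :=
    (Nat.cast_ne_zero.mpr Nat.card_pos.ne').isUnit
  have hdisj : Disjoint A (QuotientGroup.mk' B).ker := by rwa [hker, disjoint_iff]
  rw [isVanishing_iff_not_isUnit_conjSum, isVanishing_iff_not_isUnit_conjSum, not_iff_not]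
  exact (isUnit_conjSum_map_iff (QuotientGroup.mk'_surjective B) hcard hdisj ha).symm
end

section
/- Let G be a finite group with normal subgroups N ≤ M such that there exists an irreducible character ν of N whose inertia subgroup in M equals N (i.e., I_M(ν) = N). Then every element of M \ N is a vanishing element of G. -/
/-!
Let `e ∈ ℂ[N]` be the central idempotent of `ν`, and let `V` be an irreducible representation of
`G` on which `e` acts as a nonzero operator `E`. If `h ∈ G` does not fix `ν`, then `e` and its
conjugate `h e h⁻¹` are orthogonal, so `E h E = 0` and hence `tr (E h) = tr (E h E) = 0`. By Schur's
lemma the average of `x⁻¹ E x` over `x ∈ G` is the scalar `tr E / dim V`; multiplying by `g` and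
taking traces expresses `tr E / dim V · χ_V(g)` as the average of the numbers `tr (E x g x⁻¹)`. When
no conjugate of `g` fixes `ν`, these all vanish, whereas `tr E = rank E ≠ 0`.
-/

open CategoryTheory Module
open scoped MonoidAlgebra

universe u v w

section Irreducible

variable {k : Type u} {G : Type v} {V : Type w} [Field k] [Monoid G] [AddCommGroup V] [Module k V]

theorem nontrivial_of_isIrreducible (ρ : Representation k G V) [ρ.IsIrreducible] :
    Nontrivial V :=
  (IsSimpleModule.nontrivial k[G] ρ.asModule : Nontrivial V)

theorem isIrreducible_ρ_of_simple (V : FDRep k G) [Simple V] :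
    Representation.IsIrreducible V.ρ := by
  have : Nontrivial V := by
    by_contra! hV
    exact id_nonzero V (by ext v; exact Subsingleton.elim _ _)
  have : Nontrivial (Subrepresentation V.ρ) :=
    ⟨⊥, ⊤, fun h => bot_ne_top (α := Submodule k V) congr(($h).toSubmodule)⟩
  refine ⟨fun W => ?_⟩
  let i : FDRep.of W.toRepresentation ⟶ V :=
    FDRep.forget₂HomLinearEquiv _ _ (Rep.ofHom ⟨W.toSubmodule.subtype, fun _ => rfl⟩)
  have hi (w : W.toSubmodule) : i w = w := rfl
  have : Mono i := ConcreteCategory.mono_of_injective _ Subtype.val_injective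
  by_cases h : i = 0
  · left
    refine Subrepresentation.toSubmodule_injective <|
      (Submodule.eq_bot_iff _).2 fun w hw => (hi ⟨w, hw⟩).symm.trans ?_
    rw [h]
    rfl
  · right
    have := isIso_of_mono_of_nonzero h
    refine Subrepresentation.toSubmodule_injective <| Submodule.eq_top_iff'.2 fun v => ?_
    obtain ⟨w, rfl⟩ := (ConcreteCategory.bijective_of_isIso i).2 v
    exact w.2

theorem simple_of_isIrreducible_ρ (V : FDRep k G) (h : Representation.IsIrreducible V.ρ) :
    Simple V := by
  have : Simple (Rep.equivalenceModuleMonoidAlgebra.functor.obj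
      ((forget₂ (FDRep k G) (Rep k G)).obj V)) :=
    (simple_iff_isSimpleModule' _).2
      ((Representation.irreducible_iff_isSimpleModule_asModule V.ρ).1 h)
  have := (simple_obj_iff Rep.equivalenceModuleMonoidAlgebra.functor _).1 this
  exact Functor.simple_of_simple_obj (forget₂ (FDRep k G) (Rep k G)) V

theorem isIrreducible_comp_of_surjective {H : Type*} [Monoid H] (ρ : Representation k G V)
    [ρ.IsIrreducible] {f : H →* G} (hf : Function.Surjective f) :
    Representation.IsIrreducible (ρ.comp f) := by
  let e : Subrepresentation (MonoidHom.comp ρ f) ≃o Subrepresentation ρ :=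
    { toFun W := ⟨W.toSubmodule, hf.forall.2 W.apply_mem_toSubmodule⟩
      invFun W := ⟨W.toSubmodule, fun h => W.apply_mem_toSubmodule (f h)⟩
      left_inv _ := rfl
      right_inv _ := rfl
      map_rel_iff' := Iff.rfl }
  exact e.isSimpleOrder

theorem finrank_smul_eq_trace_smul_one [IsAlgClosed k] [FiniteDimensional k V]
    (ρ : Representation k G V) [ρ.IsIrreducible] {T : End k V} (hT : ∀ g, Commute T (ρ g)) :
    (finrank k V : k) • T = LinearMap.trace k V T • 1 := by
  obtain ⟨c, hc⟩ :=
    (Representation.IsIrreducible.algebraMap_intertwiningMap_bijective_of_isAlgClosed (ρ := ρ)).2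
      ⟨T, fun g => hT g⟩
  obtain rfl : c • 1 = T := congr($(hc).toLinearMap)
  rw [map_smul, LinearMap.trace_one, smul_smul, smul_eq_mul, mul_comm]

end Irreducible

section Separation

theorem exists_isSimpleModule_smul_ne_zero {R M : Type*} [Ring R] [AddCommGroup M] [Module R M]
    [IsSemisimpleModule R M] {r : R} {m : M} (h : r • m ≠ 0) :
    ∃ S : Submodule R M, IsSimpleModule R S ∧ ∃ s : S, r • s ≠ 0 := by
  by_contra! hS
  have hm : m ∈ ⨆ S : {S : Submodule R M | IsSimpleModule R S}, S.1 := by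
    rw [← sSup_eq_iSup', IsSemisimpleModule.sSup_simples_eq_top]
    trivial
  refine h (Submodule.iSup_induction _ (motive := (r • · = 0)) hm (fun S s hs => ?_) (smul_zero r)
    fun a b ha hb => ?_)
  · exact congrArg Subtype.val (hS S.1 S.2 ⟨s, hs⟩)
  · rw [smul_add, ha, hb, add_zero]

theorem exists_isIrreducible_asAlgebraHom_ne_zero {k : Type u} {G : Type v} [Field k] [Group G]
    [Finite G] [NeZero (Nat.card G : k)] {x : k[G]} (hx : x ≠ 0) :
    ∃ (V : Type max u v) (_ : AddCommGroup V) (_ : Module k V) (_ : FiniteDimensional k V)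
      (ρ : Representation k G V), ρ.IsIrreducible ∧ ρ.asAlgebraHom x ≠ 0 := by
  obtain ⟨S, hS, s, hs⟩ :=
    exists_isSimpleModule_smul_ne_zero (r := x) (m := (1 : k[G])) (by simpa using hx)
  let ρ : Representation k G S := (MonoidAlgebra.lift k _ G).symm (Algebra.lsmul k k S)
  have hρ : ρ.asAlgebraHom = Algebra.lsmul k k S := Equiv.apply_symm_apply _ _
  refine ⟨S, _, inferInstance, inferInstance, ρ, ?_, fun h => hs ?_⟩
  · let e : ρ.asModule ≃ₗ[k[G]] S :=
      { ρ.asModuleEquiv.toAddEquiv with map_smul' := fun r x => by simp [hρ] }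
    exact ρ.irreducible_iff_isSimpleModule_asModule.2 (IsSimpleModule.congr e)
  · rw [hρ] at h
    exact congr($h s)

end Separation

section CharIdempotent

variable {k : Type u} {H : Type v} {H' U U' W : Type*} [Field k] [Group H] [Fintype H]
  [Group H'] [Fintype H'] [AddCommGroup U] [Module k U] [AddCommGroup U'] [Module k U']
  [AddCommGroup W] [Module k W]

/-- The element `(σ(1) / |H|) ∑ σ(h⁻¹) h` of the group algebra attached to the character of `σ`.
For irreducible `σ` it is the central idempotent projecting onto `σ`-isotypic components. -/
noncomputable def charIdempotent (σ : Representation k H U) : k[H] :=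
  ((finrank k U : k) / Nat.card H) • ∑ h, MonoidAlgebra.single h (σ.character h⁻¹)

theorem domCongr_charIdempotent (α : H ≃* H') (σ : Representation k H U) :
    MonoidAlgebra.domCongr k k α (charIdempotent σ) =
      charIdempotent (σ.comp (α.symm : H' →* H)) := by
  have hsum : ∑ h, MonoidAlgebra.single (α h) (σ.character h⁻¹) =
      ∑ h, MonoidAlgebra.single h (σ.character (α.symm h⁻¹)) :=
    Fintype.sum_equiv α.toEquiv _ _ fun h => by simp
  simp only [charIdempotent, Nat.card_congr α.toEquiv, map_smul, map_sum,
    MonoidAlgebra.domCongr_single, hsum]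
  rfl

theorem commute_single_charIdempotent (a : H) (σ : Representation k H U) :
    Commute (MonoidAlgebra.single a 1) (charIdempotent σ) := by
  refine Commute.smul_right ?_ _
  rw [Commute, SemiconjBy, Finset.mul_sum, Finset.sum_mul]
  refine Fintype.sum_equiv (MulAut.conj a).toEquiv _ _ fun h => ?_
  simp [MonoidAlgebra.single_mul_single, ← mul_assoc]

theorem trace_asAlgebraHom_charIdempotent (σ : Representation k H U) (τ : Representation k H W) :
    LinearMap.trace k W (τ.asAlgebraHom (charIdempotent σ)) =
      finrank k U * ((Nat.card H : k)⁻¹ * ∑ h, τ.character h * σ.character h⁻¹) := by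
  simp only [charIdempotent, map_smul, map_sum, Representation.asAlgebraHom_single,
    Representation.character, div_eq_mul_inv, mul_assoc, smul_eq_mul, mul_comm]

variable [CharZero k] [IsAlgClosed k] [FiniteDimensional k U] [FiniteDimensional k U']
  [FiniteDimensional k W] (σ : Representation k H U) [σ.IsIrreducible]
  (σ' : Representation k H U') [σ'.IsIrreducible] (τ : Representation k H W) [τ.IsIrreducible]

open scoped Classical in
theorem asAlgebraHom_charIdempotent :
    τ.asAlgebraHom (charIdempotent σ) = if Nonempty (σ.Equiv τ) then 1 else 0 := by
  have := invertibleOfNonzero (NeZero.ne (Nat.card H : k))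
  have hcomm (h : H) : Commute (τ.asAlgebraHom (charIdempotent σ)) (τ h) := by
    rw [← τ.asAlgebraHom_single_one h]
    exact ((commute_single_charIdempotent h σ).map _).symm
  have hschur := finrank_smul_eq_trace_smul_one τ hcomm
  rw [trace_asAlgebraHom_charIdempotent, Representation.char_orthonormal] at hschur
  have := nontrivial_of_isIrreducible τ
  have hW : (finrank k W : k) ≠ 0 := Nat.cast_ne_zero.2 finrank_pos.ne'
  refine smul_right_injective _ hW (hschur.trans ?_)
  split_ifs with h
  · obtain ⟨φ⟩ := h
    rw [φ.toLinearEquiv.finrank_eq, mul_one]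
  · simp only [mul_zero, zero_smul, smul_zero]

theorem isIdempotentElem_charIdempotent : IsIdempotentElem (charIdempotent σ) := by
  by_contra h
  obtain ⟨W, _, _, _, τ, _, hτ⟩ := exists_isIrreducible_asAlgebraHom_ne_zero (sub_ne_zero.2 h)
  rw [map_sub, map_mul, asAlgebraHom_charIdempotent] at hτ
  split_ifs at hτ <;> simp at hτ

theorem charIdempotent_ne_zero : charIdempotent σ ≠ 0 := by
  intro h
  have := nontrivial_of_isIrreducible σ
  have hone := asAlgebraHom_charIdempotent σ σ
  rw [if_pos ⟨.refl _⟩, h, map_zero] at hone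
  exact zero_ne_one hone

theorem charIdempotent_mul_charIdempotent [IsEmpty (σ.Equiv σ')] :
    charIdempotent σ * charIdempotent σ' = 0 := by
  by_contra h
  obtain ⟨W, _, _, _, τ, _, hτ⟩ := exists_isIrreducible_asAlgebraHom_ne_zero h
  rw [map_mul, asAlgebraHom_charIdempotent, asAlgebraHom_charIdempotent] at hτ
  split_ifs at hτ with hσ hσ'
  · exact isEmptyElim (hσ.some.trans hσ'.some.symm)
  all_goals simp at hτ

end CharIdempotent

section Averaging

variable {k G V : Type*} [Field k] [IsAlgClosed k] [Group G] [AddCommGroup V] [Module k V]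
  [FiniteDimensional k V] (ρ : Representation k G V) [ρ.IsIrreducible]

theorem finrank_mul_sum_trace_mul_conj [Fintype G] (T : End k V) (g : G) :
    finrank k V * ∑ x, LinearMap.trace k V (T * ρ (x * g * x⁻¹)) =
      Nat.card G * LinearMap.trace k V T * ρ.character g := by
  let A : End k V := ∑ x, ρ x⁻¹ * T * ρ x
  have hA (h : G) : Commute A (ρ h) := by
    simp only [A, Commute, SemiconjBy, Finset.sum_mul, Finset.mul_sum]
    refine Fintype.sum_equiv (Equiv.mulRight h) _ _ fun x => ?_
    simp only [Equiv.coe_mulRight, mul_inv_rev, ← mul_assoc, ← map_mul, mul_inv_cancel, one_mul]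
    rw [mul_assoc, ← map_mul]
  have htraceA : LinearMap.trace k V A = Nat.card G * LinearMap.trace k V T := by
    have hx (x : G) : LinearMap.trace k V (ρ x⁻¹ * T * ρ x) = LinearMap.trace k V T := by
      rw [LinearMap.trace_mul_cycle, ← map_mul, mul_inv_cancel, map_one, one_mul]
    simp [A, hx]
  have htraceAg :
      LinearMap.trace k V (A * ρ g) = ∑ x, LinearMap.trace k V (T * ρ (x * g * x⁻¹)) := by
    simp only [A, Finset.sum_mul, map_sum]
    refine Fintype.sum_congr _ _ fun x => ?_
    rw [mul_assoc, mul_assoc, LinearMap.trace_mul_comm, mul_assoc, ← map_mul, ← map_mul]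
  calc
    _ = LinearMap.trace k V ((finrank k V : k) • A * ρ g) := by
      rw [smul_mul_assoc, map_smul, htraceAg, smul_eq_mul]
    _ = LinearMap.trace k V (LinearMap.trace k V A • 1 * ρ g) := by
      rw [finrank_smul_eq_trace_smul_one ρ hA]
    _ = _ := by
      rw [smul_mul_assoc, one_mul, map_smul, htraceA, smul_eq_mul, Representation.character]

theorem character_eq_zero_of_isIdempotentElem [CharZero k] [Finite G] {E : End k V}
    (hE : IsIdempotentElem E) (hE₀ : E ≠ 0) {g : G}
    (hg : ∀ x, E * ρ (x * g * x⁻¹) * E = 0) : ρ.character g = 0 := by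
  have := Fintype.ofFinite G
  have hconj (x : G) : LinearMap.trace k V (E * ρ (x * g * x⁻¹)) = 0 := by
    rw [← hE.eq, mul_assoc, LinearMap.trace_mul_comm, hg, map_zero]
  have htrace : LinearMap.trace k V E ≠ 0 :=
    mt (LinearMap.IsIdempotentElem.eq_zero_of_trace_eq_zero hE) hE₀
  have havg := finrank_mul_sum_trace_mul_conj ρ E g
  simp only [hconj, Finset.sum_const_zero, mul_zero] at havg
  exact (mul_eq_zero.1 havg.symm).resolve_left (mul_ne_zero (NeZero.ne _) htrace)

end Averaging

section Inertia

variable {k : Type u} {G : Type v} [Field k] [Group G] {N : Subgroup G}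

/-- The image in `k[G]` of the idempotent attached to a representation `σ` of a subgroup. For
irreducible `σ`, it acts nontrivially on a representation of `G` exactly when the restriction of
that representation contains `σ`. -/
noncomputable def inducedIdempotent [Fintype N] {U : Type*} [AddCommGroup U] [Module k U]
    (σ : Representation k N U) : k[G] :=
  MonoidAlgebra.mapDomainAlgHom k k N.subtype (charIdempotent σ)

/-- The inertia subgroup in `G` of a function `χ` (in practice, a character) on a normal
subgroup `N`: the elements of `G` whose conjugation action on `N` preserves `χ`. -/
def inertiaSubgroup [N.Normal] {α : Type*} (χ : N → α) : Subgroup G where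
  carrier := {g | ∀ n, χ (MulAut.conjNormal g n) = χ n}
  one_mem' := by simp
  mul_mem' {a b} ha hb n := by rw [map_mul, MulAut.mul_apply, ha, hb]
  inv_mem' {a} ha n := by rw [← ha, ← MulAut.mul_apply, ← map_mul]; simp

theorem mem_inertiaSubgroup_iff_inv_mul_mul [N.Normal] {α : Type*} {χ : N → α} {g : G} :
    g ∈ inertiaSubgroup χ ↔
      ∀ (n : G) (hn : n ∈ N) (hgn : g⁻¹ * n * g ∈ N), χ ⟨g⁻¹ * n * g, hgn⟩ = χ ⟨n, hn⟩ := by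
  have hconj (n : N) (h : g⁻¹ * n * g ∈ N) : MulAut.conjNormal g⁻¹ n = ⟨g⁻¹ * n * g, h⟩ :=
    Subtype.ext (by simp)
  rw [← inv_mem_iff]
  refine ⟨fun h n hn hgn => hconj ⟨n, hn⟩ hgn ▸ h ⟨n, hn⟩, fun h n => ?_⟩
  have hgn : g⁻¹ * n * g ∈ N := by simpa using (inferInstance : N.Normal).conj_mem n n.2 g⁻¹
  exact hconj n hgn ▸ h n n.2 hgn

theorem single_mul_mapDomainAlgHom_subtype {R : Type*} [CommSemiring R] [N.Normal] (g : G)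
    (x : R[N]) :
    MonoidAlgebra.single g 1 * MonoidAlgebra.mapDomainAlgHom R R N.subtype x =
      MonoidAlgebra.mapDomainAlgHom R R N.subtype
        (MonoidAlgebra.domCongr R R (MulAut.conjNormal g) x) * MonoidAlgebra.single g 1 := by
  induction x using MonoidAlgebra.induction_on with
  | of n => simp
  | add x y hx hy => simp only [map_add, mul_add, add_mul, hx, hy]
  | smul r x hx => simp only [map_smul, mul_smul_comm, smul_mul_assoc, hx]

variable [IsAlgClosed k] [CharZero k] [Fintype N] {U : Type*} [AddCommGroup U] [Module k U]
  [FiniteDimensional k U] (σ : Representation k N U) [σ.IsIrreducible]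

theorem isIdempotentElem_inducedIdempotent : IsIdempotentElem (inducedIdempotent σ) :=
  (isIdempotentElem_charIdempotent σ).map _

theorem inducedIdempotent_ne_zero : inducedIdempotent σ ≠ 0 :=
  (map_ne_zero_iff _ (MonoidAlgebra.mapDomain_injective N.subtype_injective)).2
    (charIdempotent_ne_zero σ)

theorem inducedIdempotent_mul_single_mul_inducedIdempotent [N.Normal] {g : G}
    (hg : g ∉ inertiaSubgroup σ.character) :
    inducedIdempotent σ * .single g 1 * inducedIdempotent σ = 0 := by
  let α : MulAut N := MulAut.conjNormal g
  have := isIrreducible_comp_of_surjective σ (f := (α.symm : N →* N)) α.symm.surjective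
  have : IsEmpty (σ.Equiv (σ.comp (α.symm : N →* N))) :=
    ⟨fun φ => hg fun n => (congrFun (Representation.char_iso φ) (α n)).trans
      congr(σ.character $(α.symm_apply_apply n))⟩
  rw [inducedIdempotent, mul_assoc, single_mul_mapDomainAlgHom_subtype, domCongr_charIdempotent,
    ← mul_assoc, ← map_mul, charIdempotent_mul_charIdempotent, map_zero, zero_mul]

end Inertia

theorem vanishing_of_fully_induced_general {G : Type} [Group G] [Finite G] {N : Subgroup G}
    [N.Normal] (ν : FDRep ℂ N) (hν : Simple ν) {g : G}
    (hg : ∀ x, x * g * x⁻¹ ∉ inertiaSubgroup ν.character) : IsVanishing g := by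
  have := Fintype.ofFinite N
  have := isIrreducible_ρ_of_simple ν
  obtain ⟨V, _, _, _, ρ, hρ, hne⟩ :=
    exists_isIrreducible_asAlgebraHom_ne_zero (inducedIdempotent_ne_zero ν.ρ)
  refine ⟨FDRep.of ρ, simple_of_isIrreducible_ρ _ hρ,
    character_eq_zero_of_isIdempotentElem ρ
      ((isIdempotentElem_inducedIdempotent ν.ρ).map ρ.asAlgebraHom) hne fun x => ?_⟩
  rw [← ρ.asAlgebraHom_single_one, ← map_mul, ← map_mul,
    inducedIdempotent_mul_single_mul_inducedIdempotent ν.ρ (hg x), map_zero]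

theorem vanishing_of_fully_induced (G : Type) [Group G] [Fintype G]
    (N M : Subgroup G) [N.Normal] [M.Normal] (hNM : N ≤ M)
    (ν : FDRep ℂ N) (hν : CategoryTheory.Simple ν)
    (hinertia : ∀ m ∈ M,
      ((∀ (n : G) (hn : n ∈ N) (hmn : m⁻¹ * n * m ∈ N),
          ν.character ⟨m⁻¹ * n * m, hmn⟩ = ν.character ⟨n, hn⟩) ↔ m ∈ N)) :
    ∀ g ∈ M, g ∉ N → IsVanishing g := by
  refine fun g hgM hgN => vanishing_of_fully_induced_general ν hν fun x hx => hgN ?_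
  have hxN : x * g * x⁻¹ ∈ N :=
    (hinertia _ (‹M.Normal›.conj_mem g hgM x)).1 (mem_inertiaSubgroup_iff_inv_mul_mul.1 hx)
  simpa [mul_assoc] using ‹N.Normal›.conj_mem' _ hxN x
end
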